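/- ∫₀¹ log Γ(x)·log(sin(πx)) dx = −(1/2)·log 2·log(2π) − π²/24. -/

import Mathlib

open Real

/-!
The reflection formula reads `log Γ(x) + log Γ(1 - x) = log 2π - L(x)` with `L(x) = log (2 sin πx)`,
so averaging the integral with its reflection under `x ↦ 1 - x` leaves only `∫ L` and `∫ L²`.
Since `log (1 - exp (2πix)) = L(x) + iπ(x - 1/2)`, these two integrals are read off from the real
parts of the mean values of `log (1 - z)` and `log (1 - z)²` over the unit circle. Both mean values
vanish: on circles of radius `r < 1` this is the mean value property at `z = 0`, and `r → 1` is a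
dominated limit because `|1 - z| ≤ 2 |1 - rz|` for `|z| = 1`.
-/

open Set Filter MeasureTheory Topology Interval

lemma memLp_restrict_of_continuousOn_of_subset_isCompact {X E : Type*} [TopologicalSpace X]
    [T2Space X] [MeasurableSpace X] [BorelSpace X] [NormedAddCommGroup E] {μ : Measure X}
    [IsFiniteMeasureOnCompacts μ] {f : X → E} {s K : Set X} (hK : IsCompact K) (hsK : s ⊆ K)
    (hf : ContinuousOn f K) (p : ENNReal) : MemLp f p (μ.restrict s) := by
  have : IsFiniteMeasure (μ.restrict K) := ⟨by simpa using hK.measure_lt_top⟩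
  obtain ⟨C, hC⟩ := hK.exists_bound_of_continuousOn hf
  refine MemLp.mono_measure (Measure.restrict_mono hsK le_rfl) (.of_bound ?_ C ?_)
  · exact hf.aestronglyMeasurable_of_isCompact hK hK.measurableSet
  · exact (ae_restrict_mem hK.measurableSet).mono hC

lemma memLp_uIoc_of_continuousOn {E : Type*} [NormedAddCommGroup E] {μ : Measure ℝ}
    [IsFiniteMeasureOnCompacts μ] {f : ℝ → E} {a b : ℝ} (hf : ContinuousOn f [[a, b]])
    (p : ENNReal) : MemLp f p (μ.restrict (Ι a b)) :=
  memLp_restrict_of_continuousOn_of_subset_isCompact isCompact_uIcc uIoc_subset_uIcc hf p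

lemma eventuallyEq_zero_of_meromorphicOrderAt_eq_top {𝕜 E : Type*} [NontriviallyNormedField 𝕜]
    [NormedAddCommGroup E] [NormedSpace 𝕜 E] {f : 𝕜 → E} {U : Set 𝕜}
    (hf : ∀ u ∈ U, meromorphicOrderAt f u = ⊤) : f =ᶠ[codiscreteWithin U] 0 := by
  rw [EventuallyEq, Filter.Eventually, mem_codiscreteWithin_iff_forall_mem_nhdsNE]
  exact fun u hu => mem_of_superset (meromorphicOrderAt_eq_top_iff.mp (hf u hu)) subset_union_left

section LogIntegrability

variable {E : Type*} [NormedAddCommGroup E] [NormedSpace ℝ E] {p : ENNReal} {a b : ℝ}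

lemma intervalIntegrable_exp_mul_log {t : ℝ} (ht : -1 < t) :
    IntervalIntegrable (fun x => exp (t * log x)) volume a b := by
  refine intervalIntegrable_of_even (by simp) fun x hx => ?_
  refine (intervalIntegral.intervalIntegrable_rpow' (r := t) ht).congr_uIoo fun y hy => ?_
  rw [uIoo_of_le hx.le] at hy
  simp only [rpow_def_of_pos hy.1, mul_comm]

/- A random variable with finite exponential moments has finite moments of all orders; on a bounded
interval, `exp (t * log |x|) = |x| ^ t` is integrable for `t > -1`. -/
lemma memLp_log_sub (hp : p ≠ ⊤) (u : ℝ) :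
    MemLp (fun x => log (x - u)) p (volume.restrict (Ι a b)) := by
  lift p to NNReal using hp
  refine ProbabilityTheory.memLp_of_mem_interior_integrableExpSet ?_ p
  refine mem_interior.mpr ⟨Ioi (-1), fun t ht => ?_, isOpen_Ioi, by simp⟩
  have h := (intervalIntegrable_exp_mul_log (a := a - u) (b := b - u) ht).comp_sub_right u
  simp only [sub_add_cancel] at h
  exact intervalIntegrable_iff.mp h

lemma memLp_log_norm_of_meromorphicOn {f : ℝ → E} (hf : MeromorphicOn f [[a, b]]) (hp : p ≠ ⊤) :
    MemLp (fun x => log ‖f x‖) p (volume.restrict (Ι a b)) := by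
  have hae : codiscreteWithin [[a, b]] ≥ ae (volume.restrict (Ι a b)) :=
    (ae_restrict_le_codiscreteWithin measurableSet_uIoc).trans
      (codiscreteWithin_mono uIoc_subset_uIcc)
  by_cases hfin : ∃ u : [[a, b]], meromorphicOrderAt f u ≠ ⊤
  · rw [hf.exists_meromorphicOrderAt_ne_top_iff_forall (isConnected_Icc inf_le_sup)] at hfin
    obtain ⟨g, hg, hg0, hfg⟩ := hf.extract_zeros_poles hfin
      ((MeromorphicOn.divisor f [[a, b]]).finiteSupport isCompact_uIcc)
    refine .ae_eq ((MeromorphicOn.extract_zeros_poles_log hg0 hfg).filter_mono hae).symm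
      (.add ?_ ?_)
    · refine finsum_induction (MemLp · p (volume.restrict (Ι a b))) MemLp.zero
        (fun _ _ => MemLp.add) fun u => ?_
      simpa only [norm_eq_abs, log_abs] using! (memLp_log_sub hp u).const_mul _
    · exact memLp_uIoc_of_continuousOn
        (hg.continuousOn.norm.log fun x hx => norm_ne_zero_iff.mpr (hg0 ⟨x, hx⟩)) p
  · push Not at hfin
    have hf0 : f =ᵐ[volume.restrict (Ι a b)] 0 :=
      (eventuallyEq_zero_of_meromorphicOrderAt_eq_top fun u hu => hfin ⟨u, hu⟩).filter_mono hae
    refine MemLp.zero.ae_eq (hf0.mono fun x hx => ?_)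
    simp [hx]

lemma memLp_log_of_meromorphicOn {f : ℝ → ℝ} (hf : MeromorphicOn f [[a, b]]) (hp : p ≠ ⊤) :
    MemLp (fun x => log (f x)) p (volume.restrict (Ι a b)) := by
  simpa only [norm_eq_abs, log_abs] using memLp_log_norm_of_meromorphicOn hf hp

end LogIntegrability

lemma meromorphic_Gamma : Meromorphic Real.Gamma := by
  intro x
  have h := (Complex.differentiable_one_div_Gamma.analyticAt (x : ℂ)).re_ofReal
  simp only [Complex.Gamma_ofReal, ← Complex.ofReal_inv, Complex.ofReal_re] at h
  exact MeromorphicAt.inv_iff.mp h.meromorphicAt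

lemma circleAverage_eq_of_harmonicOnNhd_ball_of_dominated {F : Type*} [NormedAddCommGroup F]
    [NormedSpace ℝ F] [CompleteSpace F] {f : ℂ → F} {c : ℂ} {R : ℝ} (hR : 0 < R)
    (hf : InnerProductSpace.HarmonicOnNhd f (Metric.ball c R)) {bound : ℝ → ℝ}
    (hint : IntervalIntegrable bound volume 0 (2 * π))
    (hbound : ∀ᵐ θ, ∀ r ∈ Ioo 0 R, ‖f (circleMap c r θ)‖ ≤ bound θ)
    (hlim : ∀ᵐ θ, Tendsto (fun r => f (circleMap c r θ)) (𝓝[<] R) (𝓝 (f (circleMap c R θ)))) :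
    circleAverage f c R = f c := by
  have hIoo : Ioo 0 R ∈ 𝓝[<] R := Ioo_mem_nhdsLT hR
  have hmean : ∀ r ∈ Ioo 0 R,
      circleAverage f c r = f c ∧ Continuous fun θ => f (circleMap c r θ) := by
    intro r hr
    have hf' := hf.mono (Metric.closedBall_subset_ball (x := c) hr.2)
    refine ⟨InnerProductSpace.HarmonicOnNhd.circleAverage_eq (by rwa [abs_of_pos hr.1]), ?_⟩
    exact hf'.continuousOn.comp_continuous (continuous_circleMap c r)
      fun θ => circleMap_mem_closedBall c hr.1.le θ
  have hconv := intervalIntegral.tendsto_integral_filter_of_dominated_convergence bound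
    (eventually_of_mem hIoo fun r hr => (hmean r hr).2.aestronglyMeasurable)
    (eventually_of_mem hIoo fun r hr => hbound.mono fun θ hθ _ => hθ r hr) hint
    (hlim.mono fun θ hθ _ => hθ)
  refine tendsto_nhds_unique (hconv.const_smul (2 * π)⁻¹) (tendsto_const_nhds.congr' ?_)
  exact eventually_of_mem hIoo fun r hr => (hmean r hr).1.symm

lemma circleAverage_eq_integral_zero_one {E : Type*} [NormedAddCommGroup E] [NormedSpace ℝ E]
    (f : ℂ → E) (c : ℂ) (R : ℝ) :
    circleAverage f c R = ∫ x in (0 : ℝ)..1, f (circleMap c R (2 * π * x)) := by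
  rw [intervalIntegral.integral_comp_mul_left (fun θ => f (circleMap c R θ)) two_pi_pos.ne']
  simp [circleAverage_def]

lemma norm_log_le_abs_log_norm_add_pi (w : ℂ) : ‖Complex.log w‖ ≤ |log ‖w‖| + π := by
  have := Complex.norm_le_abs_re_add_abs_im (Complex.log w)
  rw [Complex.log_re, Complex.log_im] at this
  linarith [Complex.abs_arg_le_pi w]

lemma norm_one_sub_le_two_mul_norm_one_sub_mul {z : ℂ} (hz : ‖z‖ = 1) {r : ℝ} (hr : 0 ≤ r) :
    ‖1 - z‖ ≤ 2 * ‖1 - r * z‖ := by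
  have hrz : ‖(r : ℂ) * z‖ = r := by rw [norm_mul, hz, mul_one, Complex.norm_of_nonneg hr]
  have hradial : ‖r * z - z‖ ≤ ‖1 - r * z‖ := by
    calc ‖r * z - z‖ = |‖(1 : ℂ)‖ - ‖r * z‖| := by
          rw [← sub_one_mul, norm_mul, hz, mul_one, hrz, norm_one, abs_sub_comm]
          norm_cast
      _ ≤ ‖1 - r * z‖ := abs_norm_sub_norm_le _ _
  calc ‖1 - z‖ = ‖(1 - r * z) + (r * z - z)‖ := by ring_nf
    _ ≤ ‖1 - r * z‖ + ‖r * z - z‖ := norm_add_le _ _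
    _ ≤ 2 * ‖1 - r * z‖ := by linarith

lemma norm_log_one_sub_mul_le {z : ℂ} (hz : ‖z‖ = 1) (hz1 : z ≠ 1) {r : ℝ}
    (hr : r ∈ Icc (0 : ℝ) 1) :
    ‖Complex.log (1 - r * z)‖ ≤ |log ‖1 - z‖| + (log 2 + π) := by
  have hpos : 0 < ‖1 - z‖ := norm_pos_iff.mpr (sub_ne_zero.mpr hz1.symm)
  have hlower := norm_one_sub_le_two_mul_norm_one_sub_mul hz hr.1
  have hpos' : 0 < ‖1 - r * z‖ := by linarith
  have hupper : ‖1 - r * z‖ ≤ 2 := by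
    have := norm_sub_le 1 ((r : ℂ) * z)
    rw [norm_mul, hz, mul_one, Complex.norm_of_nonneg hr.1, norm_one] at this
    linarith [hr.2]
  have hlog_lower := log_le_log hpos hlower
  rw [log_mul two_ne_zero hpos'.ne'] at hlog_lower
  have hlog : |log ‖1 - r * z‖| ≤ |log ‖1 - z‖| + log 2 := by
    rw [abs_le]
    constructor
    · linarith [neg_abs_le (log ‖1 - z‖)]
    · linarith [log_le_log hpos' hupper, abs_nonneg (log ‖1 - z‖)]
  linarith [norm_log_le_abs_log_norm_add_pi (1 - r * z)]

lemma one_sub_mem_slitPlane {z : ℂ} (hz : ‖z‖ ≤ 1) (hz1 : z ≠ 1) :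
    1 - z ∈ Complex.slitPlane := by
  rw [Complex.mem_slitPlane_iff, Complex.sub_re, Complex.sub_im, Complex.one_re, Complex.one_im,
    zero_sub, neg_ne_zero, or_iff_not_imp_right, not_not, sub_pos]
  intro him
  exact ((Complex.re_le_norm z).trans hz).lt_of_ne fun hre => hz1 (Complex.ext hre him)

lemma ae_circleMap_ne {c : ℂ} {R : ℝ} (hR : R ≠ 0) (w : ℂ) : ∀ᵐ θ, circleMap c R θ ≠ w :=
  ((countable_singleton w).preimage_circleMap c hR).ae_notMem volume

lemma analyticAt_log_one_sub {z : ℂ} (hz : ‖z‖ ≤ 1) (hz1 : z ≠ 1) :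
    AnalyticAt ℂ (fun z => Complex.log (1 - z)) z :=
  (analyticAt_const.sub analyticAt_id).clog (one_sub_mem_slitPlane hz hz1)

lemma memLp_log_norm_one_sub_circleMap {p : ENNReal} (hp : p ≠ ⊤) (r a b : ℝ) :
    MemLp (fun θ => log ‖1 - circleMap 0 r θ‖) p (volume.restrict (Ι a b)) :=
  memLp_log_norm_of_meromorphicOn (fun θ _ => (analyticAt_const.sub
    (analyticOnNhd_circleMap 0 r θ (mem_univ θ))).meromorphicAt) hp

lemma circleAverage_log_one_sub_pow {n : ℕ} (hn : n ≠ 0) :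
    circleAverage (fun z => Complex.log (1 - z) ^ n) 0 1 = 0 := by
  have hbound : MemLp (fun θ => |log ‖1 - circleMap 0 1 θ‖| + (log 2 + π)) n
      (volume.restrict (Ι 0 (2 * π))) :=
    (memLp_log_norm_one_sub_circleMap (ENNReal.natCast_ne_top n) _ _ _).abs.add
      (memLp_uIoc_of_continuousOn continuousOn_const n)
  rw [circleAverage_eq_of_harmonicOnNhd_ball_of_dominated one_pos
    (bound := fun θ => |(|log ‖1 - circleMap 0 1 θ‖| + (log 2 + π))| ^ n)]
  · simp [hn]
  · intro z hz
    rw [mem_ball_zero_iff] at hz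
    exact ((analyticAt_log_one_sub hz.le (by rintro rfl; simp at hz)).pow n).harmonicAt
  · exact intervalIntegrable_iff.mpr (hbound.integrable_norm_pow hn)
  · filter_upwards [ae_circleMap_ne (c := 0) one_ne_zero 1] with θ hθ r hr
    have hmul : circleMap 0 r θ = r * circleMap 0 1 θ := by simp [circleMap_zero]
    rw [norm_pow, hmul]
    gcongr
    exact (norm_log_one_sub_mul_le (by simp) hθ ⟨hr.1.le, hr.2.le⟩).trans (le_abs_self _)
  · filter_upwards [ae_circleMap_ne (c := 0) one_ne_zero 1] with θ hθ
    have hradial : ContinuousAt (fun r : ℝ => circleMap 0 r θ) 1 := by unfold circleMap; fun_prop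
    have hlog := ((analyticAt_log_one_sub (by simp) hθ).pow n).continuousAt
    exact (hlog.comp_of_eq hradial rfl).tendsto.mono_left nhdsWithin_le_nhds

lemma one_sub_circleMap_two_pi_mul (x : ℝ) :
    1 - circleMap 0 1 (2 * π * x) =
      (2 * sin (π * x) : ℝ) * Complex.exp ((π * x - π / 2 : ℝ) * Complex.I) := by
  have hcos : cos (2 * π * x) = 1 - 2 * sin (π * x) ^ 2 := by
    rw [mul_assoc, cos_two_mul, cos_sq']; ring
  have hsin : sin (2 * π * x) = 2 * sin (π * x) * cos (π * x) := by rw [mul_assoc, sin_two_mul]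
  rw [Complex.exp_mul_I, ← Complex.ofReal_cos, ← Complex.ofReal_sin, cos_sub_pi_div_two,
    sin_sub_pi_div_two, circleMap_zero, Complex.exp_mul_I, ← Complex.ofReal_cos,
    ← Complex.ofReal_sin, hcos, hsin]
  push_cast
  ring

lemma sin_pi_mul_pos {x : ℝ} (hx : x ∈ Ioo (0 : ℝ) 1) : 0 < sin (π * x) :=
  sin_pos_of_pos_of_lt_pi (mul_pos pi_pos hx.1) (mul_lt_of_lt_one_right pi_pos hx.2)

lemma log_one_sub_circleMap_two_pi_mul {x : ℝ} (hx : x ∈ Ioo (0 : ℝ) 1) :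
    Complex.log (1 - circleMap 0 1 (2 * π * x)) =
      log (2 * sin (π * x)) + (π * x - π / 2 : ℝ) * Complex.I := by
  have hs : 0 < 2 * sin (π * x) := mul_pos two_pos (sin_pi_mul_pos hx)
  rw [one_sub_circleMap_two_pi_mul, Complex.log_ofReal_mul hs (Complex.exp_ne_zero _),
    Complex.log_exp]
  all_goals
    rw [Complex.im_ofReal_mul, Complex.I_im, mul_one]
    nlinarith [pi_pos, hx.1, hx.2]

lemma memLp_log_two_mul_sin_pi_mul {p : ENNReal} (hp : p ≠ ⊤) (a b : ℝ) :
    MemLp (fun x => log (2 * sin (π * x))) p (volume.restrict (Ι a b)) :=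
  memLp_log_of_meromorphicOn (fun x _ => (by fun_prop : AnalyticAt ℝ _ x).meromorphicAt) hp

lemma integral_log_two_mul_sin_pi_mul_add_mul_I_pow {n : ℕ} (hn : n ≠ 0) :
    ∫ x in (0 : ℝ)..1,
      ((log (2 * sin (π * x)) : ℂ) + (π * x - π / 2 : ℝ) * Complex.I) ^ n = 0 := by
  rw [← circleAverage_log_one_sub_pow hn, circleAverage_eq_integral_zero_one]
  refine intervalIntegral.integral_congr_uIoo fun x hx => ?_
  rw [uIoo_of_le zero_le_one] at hx
  simp only [log_one_sub_circleMap_two_pi_mul hx]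

lemma intervalIntegrable_log_two_mul_sin_pi_mul_add_mul_I_pow (n : ℕ) (a b : ℝ) :
    IntervalIntegrable
      (fun x : ℝ => ((log (2 * sin (π * x)) : ℂ) + (π * x - π / 2 : ℝ) * Complex.I) ^ n)
      volume a b := by
  have him : MemLp (fun x : ℝ => ((π * x - π / 2 : ℝ) : ℂ) * Complex.I) n
      (volume.restrict (Ι a b)) := memLp_uIoc_of_continuousOn (by fun_prop) n
  have h := (memLp_log_two_mul_sin_pi_mul (ENNReal.natCast_ne_top n) a b).ofReal (K := ℂ) |>.add him
  have : IsFiniteMeasure (volume.restrict (Ι a b)) := ⟨by simp⟩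
  refine intervalIntegrable_iff.mpr ((integrable_norm_iff (h.aestronglyMeasurable.pow n)).mp ?_)
  simpa only [Pi.pow_apply, norm_pow] using h.integrable_norm_pow'

lemma integral_re_log_two_mul_sin_pi_mul_add_mul_I_pow {n : ℕ} (hn : n ≠ 0) :
    ∫ x in (0 : ℝ)..1,
      (((log (2 * sin (π * x)) : ℂ) + (π * x - π / 2 : ℝ) * Complex.I) ^ n).re = 0 := by
  have h := Complex.reCLM.intervalIntegral_comp_comm
    (intervalIntegrable_log_two_mul_sin_pi_mul_add_mul_I_pow n 0 1)
  rwa [integral_log_two_mul_sin_pi_mul_add_mul_I_pow hn, map_zero] at h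

lemma integral_log_two_mul_sin_pi_mul : ∫ x in (0 : ℝ)..1, log (2 * sin (π * x)) = 0 := by
  simpa using! integral_re_log_two_mul_sin_pi_mul_add_mul_I_pow one_ne_zero

lemma integral_pi_mul_sub_pi_div_two_sq :
    ∫ x in (0 : ℝ)..1, (π * x - π / 2) ^ 2 = π ^ 2 / 12 := by
  rw [intervalIntegral.integral_comp_mul_sub (· ^ 2) pi_ne_zero, integral_pow]
  simp only [mul_one, Nat.reduceAdd, mul_zero, zero_sub, Nat.cast_ofNat, smul_eq_mul]
  field_simp
  ring

lemma intervalIntegrable_log_two_mul_sin_pi_mul (a b : ℝ) :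
    IntervalIntegrable (fun x => log (2 * sin (π * x))) volume a b :=
  intervalIntegrable_iff.mpr
    (memLp_one_iff_integrable.mp (memLp_log_two_mul_sin_pi_mul ENNReal.one_ne_top a b))

lemma intervalIntegrable_log_two_mul_sin_pi_mul_sq (a b : ℝ) :
    IntervalIntegrable (fun x => log (2 * sin (π * x)) ^ 2) volume a b :=
  intervalIntegrable_iff.mpr (memLp_log_two_mul_sin_pi_mul ENNReal.ofNat_ne_top a b).integrable_sq

lemma integral_log_two_mul_sin_pi_mul_sq :
    ∫ x in (0 : ℝ)..1, log (2 * sin (π * x)) ^ 2 = π ^ 2 / 12 := by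
  have h := integral_re_log_two_mul_sin_pi_mul_add_mul_I_pow two_ne_zero
  have hre (u v : ℝ) : (((u : ℂ) + v * Complex.I) ^ 2).re = u ^ 2 - v ^ 2 := by simp [sq]
  have hquad : IntervalIntegrable (fun x => (π * x - π / 2) ^ 2) volume 0 1 :=
    Continuous.intervalIntegrable (by fun_prop) 0 1
  simp only [hre] at h
  rw [intervalIntegral.integral_sub (intervalIntegrable_log_two_mul_sin_pi_mul_sq 0 1) hquad,
    sub_eq_zero] at h
  rw [h, integral_pi_mul_sub_pi_div_two_sq]

lemma log_Gamma_add_log_Gamma_one_sub {x : ℝ} (hx : x ∈ Ioo (0 : ℝ) 1) :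
    log (Gamma x) + log (Gamma (1 - x)) = log (2 * π) - log (2 * sin (π * x)) := by
  have hsin := sin_pi_mul_pos hx
  rw [← log_mul (Gamma_pos_of_pos hx.1).ne' (Gamma_pos_of_pos (sub_pos.mpr hx.2)).ne',
    Gamma_mul_Gamma_one_sub, ← log_div (by positivity) (by positivity),
    mul_div_mul_left _ _ two_ne_zero]

lemma integral_log_Gamma_mul_of_symm {f : ℝ → ℝ} (hf : ∀ x, f (1 - x) = f x)
    (hint : IntervalIntegrable (fun x => log (Gamma x) * f x) volume 0 1) :
    ∫ x in (0 : ℝ)..1, log (Gamma x) * f x =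
      (1 / 2) * ∫ x in (0 : ℝ)..1, (log (2 * π) - log (2 * sin (π * x))) * f x := by
  have hint' : IntervalIntegrable (fun x => log (Gamma (1 - x)) * f x) volume 0 1 := by
    simpa [hf] using (hint.comp_sub_left 1).symm
  have hrefl : ∫ x in (0 : ℝ)..1, log (Gamma (1 - x)) * f x =
      ∫ x in (0 : ℝ)..1, log (Gamma x) * f x := by
    simpa [hf] using
      intervalIntegral.integral_comp_sub_left (a := 0) (b := 1) (fun x => log (Gamma x) * f x) 1
  have hsum : ∫ x in (0 : ℝ)..1, (log (2 * π) - log (2 * sin (π * x))) * f x =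
      ∫ x in (0 : ℝ)..1, (log (Gamma x) * f x + log (Gamma (1 - x)) * f x) := by
    refine intervalIntegral.integral_congr_uIoo fun x hx => ?_
    rw [uIoo_of_le zero_le_one] at hx
    simp only [← log_Gamma_add_log_Gamma_one_sub hx, add_mul]
  rw [hsum, intervalIntegral.integral_add hint hint', hrefl]
  ring

lemma intervalIntegrable_log_Gamma_mul_log_sin (a b : ℝ) :
    IntervalIntegrable (fun x => log (Gamma x) * log (sin (π * x))) volume a b := by
  have hGamma : MemLp (fun x => log (Gamma x)) 2 (volume.restrict (Ι a b)) :=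
    memLp_log_of_meromorphicOn (fun x _ => meromorphic_Gamma x) ENNReal.ofNat_ne_top
  have hsin : MemLp (fun x => log (sin (π * x))) 2 (volume.restrict (Ι a b)) :=
    memLp_log_of_meromorphicOn (fun x _ => (by fun_prop : AnalyticAt ℝ _ x).meromorphicAt)
      ENNReal.ofNat_ne_top
  exact intervalIntegrable_iff.mpr (hGamma.integrable_mul hsin)

/-- `∫₀¹ log Γ(x)·log(sin(πx)) dx = −(1/2)·log 2·log(2π) − π²/24`. -/
theorem integral_log_Gamma_mul_log_sin :
    ∫ x in (0:ℝ)..1, Real.log (Real.Gamma x) * Real.log (Real.sin (π * x)) =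
      -(1 / 2) * Real.log 2 * Real.log (2 * π) - π ^ 2 / 24 := by
  have hsymm (x : ℝ) : log (sin (π * (1 - x))) = log (sin (π * x)) := by
    rw [mul_one_sub, sin_pi_sub]
  have hL := intervalIntegrable_log_two_mul_sin_pi_mul 0 1
  have hL2 := intervalIntegrable_log_two_mul_sin_pi_mul_sq 0 1
  calc ∫ x in (0 : ℝ)..1, log (Gamma x) * log (sin (π * x))
    _ = (1 / 2) * ∫ x in (0 : ℝ)..1,
          (log (2 * π) - log (2 * sin (π * x))) * log (sin (π * x)) :=
      integral_log_Gamma_mul_of_symm hsymm (intervalIntegrable_log_Gamma_mul_log_sin 0 1)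
    _ = (1 / 2) * ∫ x in (0 : ℝ)..1, ((log (2 * π) + log 2) * log (2 * sin (π * x)) -
          log (2 * sin (π * x)) ^ 2 - log 2 * log (2 * π)) := by
      congr 1
      refine intervalIntegral.integral_congr_uIoo fun x hx => ?_
      rw [uIoo_of_le zero_le_one] at hx
      rw [log_mul two_ne_zero (sin_pi_mul_pos hx).ne']
      ring
    _ = (1 / 2) * (0 - π ^ 2 / 12 - log 2 * log (2 * π)) := by
      rw [intervalIntegral.integral_sub ((hL.const_mul _).sub hL2) intervalIntegrable_const,
        intervalIntegral.integral_sub (hL.const_mul _) hL2, intervalIntegral.integral_const_mul,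
        integral_log_two_mul_sin_pi_mul, integral_log_two_mul_sin_pi_mul_sq, mul_zero,
        intervalIntegral.integral_const, sub_zero, one_smul]
    _ = -(1 / 2) * log 2 * log (2 * π) - π ^ 2 / 24 := by ring
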